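/- Let (X_i)_{i≥1} be i.i.d. standard normal, X_{(n)} = max_{1≤i≤n} X_i, a_n = √(2 log n), c_n = log(√(4π log n)), b_n = a_n - c_n/a_n, and Y_n = a_n(X_{(n)} - b_n). Then, as n → ∞, E[e^{-Y_n} - (Y_n - c_n)²/(4 log n)] = 1 + (c_n⁴/(32 (log n)²))(1 + o(1)). -/

import Mathlib

open MeasureTheory Filter Real

/-- The standard normal cumulative distribution function. -/
noncomputable def stdNormalCDF (x : ℝ) : ℝ :=
  ∫ t in Set.Iic x, Real.exp (-t ^ 2 / 2) / Real.sqrt (2 * Real.pi)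

/-- The standard normal density. -/
noncomputable def stdNormalPDF (x : ℝ) : ℝ :=
  Real.exp (-x ^ 2 / 2) / Real.sqrt (2 * Real.pi)

/-- Scaling constant `a_n = √(2 log n)`. -/
noncomputable def aSeq (n : ℕ) : ℝ := Real.sqrt (2 * Real.log n)

/-- Centering constant
`b_n = √(2 log n) - (log log n + log (4π)) / (2 √(2 log n))`. -/
noncomputable def bSeq (n : ℕ) : ℝ :=
  aSeq n - (Real.log (Real.log n) + Real.log (4 * Real.pi)) / (2 * aSeq n)

/-- `c_n = log (√(4 π log n))`. -/
noncomputable def cSeq (n : ℕ) : ℝ := Real.log (Real.sqrt (4 * Real.pi * Real.log n))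

/-- The CDF of `Y_n = a_n (X_{(n)} - b_n)` where `X_{(n)}` is the maximum of `n`
i.i.d. standard normal random variables: `P(Y_n ≤ x) = Φ(b_n + x/a_n)^n`. -/
noncomputable def Fmax (n : ℕ) (x : ℝ) : ℝ := stdNormalCDF (bSeq n + x / aSeq n) ^ n

/-- The density of `Y_n = a_n (X_{(n)} - b_n)`:
`f_n(x) = n a_n⁻¹ φ(b_n + x/a_n) Φ(b_n + x/a_n)^{n-1}`. -/
noncomputable def fmax (n : ℕ) (x : ℝ) : ℝ :=
  n * (aSeq n)⁻¹ * stdNormalPDF (bSeq n + x / aSeq n) *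
    stdNormalCDF (bSeq n + x / aSeq n) ^ (n - 1)

/-- The density of the standard Gumbel distribution. -/
noncomputable def gumbelPDF (x : ℝ) : ℝ := Real.exp (-x - Real.exp (-x))

/-- The density of `Y_n = a_n (X_{(n)} - b_n)` with `b_n = a_n - c_n/a_n`. -/
noncomputable def fmax' (n : ℕ) (x : ℝ) : ℝ :=
  n * (aSeq n)⁻¹ * stdNormalPDF (aSeq n + (x - cSeq n) / aSeq n) *
    stdNormalCDF (aSeq n + (x - cSeq n) / aSeq n) ^ (n - 1)

/-!
Integration by parts against the distribution function `Φ(a_n + (y - c_n) / a_n) ^ n` of `Y_n`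
compares `E[e^{-Y_n}]` with `1`. Write `v = (y - c_n)² / (4 log n)`. The choice of `a_n` and `c_n`
makes the density of `Y_n` equal to `e^{-v} w` with `w = e^{-y} Φ ^ (n - 1)`, which tends to the
Gumbel density, and the expectation minus `1` becomes
`∫ ((1 - (1 + v) e^{-v}) - (1 - Φ)) w dy`.
Here `1 - (1 + v) e^{-v} ~ v² / 2 ~ c_n⁴ / (32 (log n)²)`, whereas `1 - Φ = O(1 / n)` is negligible,
so dominated convergence gives the claim. The domination as `y → -∞` comes from the log-concavity
of `Φ`.
-/

open Topology

section Analysis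

lemma one_add_mul_exp_neg_le_one (v : ℝ) : (1 + v) * exp (-v) ≤ 1 := by
  rw [exp_neg, ← div_eq_mul_inv, div_le_one (exp_pos v)]
  linarith [add_one_le_exp v]

lemma one_sub_one_add_mul_exp_neg_le_sq {v : ℝ} (hv : -1 ≤ v) :
    1 - (1 + v) * exp (-v) ≤ v ^ 2 := by
  nlinarith [add_one_le_exp (-v)]

lemma isEquivalent_one_sub_one_add_mul_exp_neg :
    Asymptotics.IsEquivalent (𝓝 0) (fun v : ℝ => 1 - (1 + v) * exp (-v)) fun v => v ^ 2 / 2 := by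
  have taylor : (fun v : ℝ => exp (-v) - (1 - v + v ^ 2 / 2)) =o[𝓝 0] fun v => v ^ 2 := by
    have hneg : Tendsto (fun v : ℝ => -v) (𝓝 0) (𝓝 0) := by
      simpa using (continuous_neg (G := ℝ)).tendsto 0
    have h := (exp_sub_sum_range_succ_isLittleO_pow 2).comp_tendsto hneg
    refine h.congr (fun v => ?_) fun v => ?_
    · simp [Finset.sum_range_succ, sub_eq_add_neg]
    · simp
  have cubic : (fun v : ℝ => v ^ 3 / 2) =o[𝓝 0] fun v => v ^ 2 := by
    simpa [div_eq_inv_mul] using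
      (Asymptotics.isLittleO_pow_pow (𝕜 := ℝ) (show 2 < 3 by norm_num)).const_mul_left 2⁻¹
  have factor : (fun v : ℝ => 1 + v) =O[𝓝 0] fun _ => (1 : ℝ) :=
    (by fun_prop : ContinuousAt (fun v : ℝ => 1 + v) 0).norm.isBoundedUnder_le.isBigO_one ℝ
  have remainder : (fun v : ℝ => (1 + v) * (exp (-v) - (1 - v + v ^ 2 / 2))) =o[𝓝 0]
      fun v => v ^ 2 := by simpa using factor.mul_isLittleO taylor
  refine Asymptotics.IsLittleO.trans_isBigO (g := fun v : ℝ => v ^ 2) ?_ ?_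
  · refine (remainder.add cubic).neg_left.congr_left fun v => ?_
    simp only [Pi.sub_apply]
    ring
  · exact (Asymptotics.isBigO_const_mul_self 2 (fun v : ℝ => v ^ 2 / 2) (𝓝 0)).congr_left
      fun v => by ring

lemma exists_eventually_forall_le_mul_add_of_concaveOn {ι : Type*} {l : Filter ι}
    {f : ι → ℝ → ℝ} {g : ℝ → ℝ} (hconc : ∀ i, ConcaveOn ℝ Set.univ (f i))
    (hnonpos : ∀ i y, f i y ≤ 0) (hlim : ∀ y, Tendsto (f · y) l (𝓝 (g y)))
    (hg : Tendsto (fun y => g y / y) atBot atTop) {k : ℝ} (hk : 0 ≤ k) :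
    ∃ b, ∀ᶠ i in l, ∀ y, f i y ≤ k * y + b := by
  have hslope : Tendsto (fun T => (g 0 - g (-T)) / T) atTop atTop := by
    have h := (tendsto_id.const_div_atTop (g 0)).add_atTop (hg.comp tendsto_neg_atTop_atBot)
    refine h.congr fun T => ?_
    simp only [id, Function.comp_apply, div_neg]
    ring
  obtain ⟨T, hkT, hT⟩ := ((hslope.eventually_gt_atTop k).and (eventually_gt_atTop 0)).exists
  refine ⟨k * T, ?_⟩
  filter_upwards [(((hlim 0).sub (hlim (-T))).div_const T).eventually (lt_mem_nhds hkT)]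
    with i hi y
  rcases le_or_gt (-T) y with hy | hy
  · nlinarith [hnonpos i y]
  · have hchord : k < (f i (-T) - f i y) / (-T - y) := by
      refine hi.trans_le ?_
      simpa using (hconc i).slope_anti_adjacent (Set.mem_univ y) (Set.mem_univ 0) hy
        (neg_lt_zero.2 hT)
    rw [lt_div_iff₀ (by linarith)] at hchord
    linarith [hnonpos i (-T)]

lemma integrable_one_add_abs_pow_mul_exp_neg_abs (k : ℕ) :
    Integrable fun y : ℝ => (1 + |y|) ^ k * exp (-|y|) := by
  have hasymp : (fun y : ℝ => (1 + y) ^ k * exp (-y)) =O[atTop] fun y => exp (-(1 / 2) * y) := by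
    have h := (isLittleO_pow_exp_pos_mul_atTop k one_half_pos).isBigO.comp_tendsto
      (tendsto_atTop_add_const_left atTop 1 tendsto_id)
    refine ((h.mul (Asymptotics.isBigO_refl (fun y => exp (-y)) atTop)).congr_right
      fun y => ?_).trans (Asymptotics.isBigO_const_mul_self (exp (1 / 2)) _ atTop)
    simp only [Function.comp_apply, id, ← exp_add]
    ring_nf
  have hhalf : IntegrableOn (fun y : ℝ => (1 + y) ^ k * exp (-y)) (Set.Ioi 0) :=
    integrable_of_isBigO_exp_neg (b := 1 / 2) (by norm_num) (by fun_prop) hasymp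
  simpa using (integrable_fun_norm_addHaar (volume : Measure ℝ)
    (f := fun y : ℝ => (1 + y) ^ k * exp (-y))).2 (by simpa using hhalf)

lemma gumbelPDF_le_exp_neg_abs (y : ℝ) : gumbelPDF y ≤ exp (-|y|) := by
  refine exp_le_exp.2 ?_
  rcases le_total 0 y with hy | hy
  · rw [abs_of_nonneg hy]
    linarith [exp_pos (-y)]
  · rw [abs_of_nonpos hy]
    nlinarith [quadratic_le_exp_of_nonneg (neg_nonneg.2 hy), sq_nonneg (y + 1)]

lemma integral_gumbelPDF : ∫ y, gumbelPDF y = 1 := by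
  have hderiv (y : ℝ) : HasDerivAt (fun y => exp (-exp (-y))) (gumbelPDF y) y := by
    refine (hasDerivAt_neg y).exp.neg.exp.congr_deriv ?_
    rw [gumbelPDF, sub_eq_add_neg, exp_add, Pi.neg_apply]
    ring
  have hint : Integrable gumbelPDF := by
    refine (integrable_one_add_abs_pow_mul_exp_neg_abs 0).mono' ?_
      (Eventually.of_forall fun y => ?_)
    · exact (by unfold gumbelPDF; fun_prop : Continuous gumbelPDF).aestronglyMeasurable
    · simpa [gumbelPDF] using gumbelPDF_le_exp_neg_abs y
  have hbot : Tendsto (fun y : ℝ => exp (-exp (-y))) atBot (𝓝 0) :=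
    tendsto_exp_neg_atTop_nhds_zero.comp (tendsto_exp_atTop.comp tendsto_neg_atBot_atTop)
  have htop : Tendsto (fun y : ℝ => exp (-exp (-y))) atTop (𝓝 1) := by
    simpa using tendsto_exp_neg_atTop_nhds_zero.neg.rexp
  rw [integral_of_hasDerivAt_of_tendsto hderiv hint hbot htop, sub_zero]

end Analysis

section StandardNormal

lemma stdNormalPDF_eq_gaussianPDFReal : stdNormalPDF = ProbabilityTheory.gaussianPDFReal 0 1 := by
  ext x
  simp [stdNormalPDF, ProbabilityTheory.gaussianPDFReal, div_eq_inv_mul]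

lemma stdNormalPDF_pos (x : ℝ) : 0 < stdNormalPDF x := by
  rw [stdNormalPDF]
  positivity

@[fun_prop]
lemma continuous_stdNormalPDF : Continuous stdNormalPDF := by
  unfold stdNormalPDF
  fun_prop

lemma integrable_stdNormalPDF : Integrable stdNormalPDF := by
  rw [stdNormalPDF_eq_gaussianPDFReal]
  exact ProbabilityTheory.integrable_gaussianPDFReal 0 1

lemma stdNormalCDF_eq_cdf :
    stdNormalCDF = ProbabilityTheory.cdf (ProbabilityTheory.gaussianReal 0 1) := by
  ext x
  rw [ProbabilityTheory.cdf_eq_real, measureReal_def,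
    ProbabilityTheory.gaussianReal_apply_eq_integral 0 one_ne_zero,
    ENNReal.toReal_ofReal (integral_nonneg (ProbabilityTheory.gaussianPDFReal_nonneg 0 1)),
    ← stdNormalPDF_eq_gaussianPDFReal]
  rfl

lemma stdNormalCDF_le_one (x : ℝ) : stdNormalCDF x ≤ 1 := by
  rw [stdNormalCDF_eq_cdf]
  exact ProbabilityTheory.cdf_le_one _ x

lemma tendsto_stdNormalCDF_atTop : Tendsto stdNormalCDF atTop (𝓝 1) := by
  rw [stdNormalCDF_eq_cdf]
  exact ProbabilityTheory.tendsto_cdf_atTop _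

lemma hasDerivAt_stdNormalPDF (x : ℝ) : HasDerivAt stdNormalPDF (-x * stdNormalPDF x) x := by
  have h := (((hasDerivAt_pow 2 x).neg.div_const 2).exp).div_const (√(2 * π))
  refine h.congr_deriv ?_
  simp only [stdNormalPDF, Pi.neg_apply]
  ring

lemma hasDerivAt_stdNormalCDF (x : ℝ) : HasDerivAt stdNormalCDF (stdNormalPDF x) x := by
  have hsplit : stdNormalCDF = fun y => stdNormalCDF 0 + ∫ t in (0 : ℝ)..y, stdNormalPDF t := by
    ext y
    rw [← intervalIntegral.integral_Iic_sub_Iic integrable_stdNormalPDF.integrableOn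
      integrable_stdNormalPDF.integrableOn]
    exact (add_sub_cancel (stdNormalCDF 0) (stdNormalCDF y)).symm
  rw [hsplit]
  exact (continuous_stdNormalPDF.integral_hasStrictDerivAt 0 x).hasDerivAt.const_add _

@[fun_prop]
lemma continuous_stdNormalCDF : Continuous stdNormalCDF :=
  continuous_iff_continuousAt.2 fun x => (hasDerivAt_stdNormalCDF x).continuousAt

lemma stdNormalCDF_pos (x : ℝ) : 0 < stdNormalCDF x := by
  have hmono : StrictMono stdNormalCDF := strictMono_of_hasDerivAt_pos hasDerivAt_stdNormalCDF
    stdNormalPDF_pos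
  exact (setIntegral_nonneg measurableSet_Iic fun t _ => (stdNormalPDF_pos t).le).trans_lt
    (hmono (sub_one_lt x))

lemma stdNormalPDF_add_mul_stdNormalCDF_nonneg (x : ℝ) :
    0 ≤ stdNormalPDF x + x * stdNormalCDF x := by
  have hmul : Integrable fun t => -t * stdNormalPDF t := by
    refine ((integrable_mul_exp_neg_mul_sq one_half_pos).neg.div_const (√(2 * π))).congr
      (Eventually.of_forall fun t => ?_)
    simp only [stdNormalPDF, Pi.neg_apply]
    ring_nf
  have hlim : Tendsto stdNormalPDF atBot (𝓝 0) :=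
    tendsto_zero_of_hasDerivAt_of_integrableOn_Iic (a := 0)
      (fun t _ => hasDerivAt_stdNormalPDF t) hmul.integrableOn
      integrable_stdNormalPDF.integrableOn
  have hpdf : ∫ t in Set.Iic x, -t * stdNormalPDF t = stdNormalPDF x := by
    rw [integral_Iic_of_hasDerivAt_of_tendsto' (fun t _ => hasDerivAt_stdNormalPDF t)
      hmul.integrableOn hlim, sub_zero]
  calc 0 ≤ ∫ t in Set.Iic x, (x - t) * stdNormalPDF t :=
        setIntegral_nonneg measurableSet_Iic fun t ht =>
          mul_nonneg (sub_nonneg.2 ht) (stdNormalPDF_pos t).le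
    _ = ∫ t in Set.Iic x, (-t * stdNormalPDF t + x * stdNormalPDF t) := by
        congr with t
        ring
    _ = stdNormalPDF x + x * stdNormalCDF x := by
        rw [integral_add hmul.integrableOn
          (integrable_stdNormalPDF.const_mul x).integrableOn, hpdf, integral_const_mul]
        rfl

lemma antitone_stdNormalPDF_div_stdNormalCDF :
    Antitone fun x => stdNormalPDF x / stdNormalCDF x := by
  refine antitone_of_hasDerivAt_nonpos (fun x => (hasDerivAt_stdNormalPDF x).div
    (hasDerivAt_stdNormalCDF x) (stdNormalCDF_pos x).ne') fun x => ?_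
  refine div_nonpos_of_nonpos_of_nonneg ?_ (sq_nonneg _)
  nlinarith [mul_nonneg (stdNormalPDF_pos x).le (stdNormalPDF_add_mul_stdNormalCDF_nonneg x)]

lemma concaveOn_log_stdNormalCDF : ConcaveOn ℝ Set.univ fun x => log (stdNormalCDF x) := by
  have hderiv (x : ℝ) : HasDerivAt (fun x => log (stdNormalCDF x))
      (stdNormalPDF x / stdNormalCDF x) x :=
    (hasDerivAt_stdNormalCDF x).log (stdNormalCDF_pos x).ne'
  refine Antitone.concaveOn_univ_of_deriv (fun x => (hderiv x).differentiableAt) ?_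
  simpa only [funext fun x => (hderiv x).deriv] using antitone_stdNormalPDF_div_stdNormalCDF

end StandardNormal

section Scaling

/-- The value `a_n + (y - c_n) / a_n` of the maximum `X_{(n)}` on the event `Y_n = y`. -/
noncomputable def unscale (n : ℕ) (y : ℝ) : ℝ := aSeq n + (y - cSeq n) / aSeq n

/-- The term `(y - c_n)² / (4 log n)`, by which the exponent of the density of `Y_n` differs from
that of its Gumbel-like factor `gumbelApprox`. -/
noncomputable def quadTerm (n : ℕ) (y : ℝ) : ℝ := (y - cSeq n) ^ 2 / (4 * log n)

/-- The claimed size `c_n⁴ / (32 (log n)²)` of `E[e^{-Y_n} - (Y_n - c_n)² / (4 log n)] - 1`. -/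
noncomputable def errorScale (n : ℕ) : ℝ := cSeq n ^ 4 / (32 * log n ^ 2)

lemma quadTerm_nonneg (n : ℕ) (y : ℝ) : 0 ≤ quadTerm n y :=
  div_nonneg (sq_nonneg _) (mul_nonneg zero_le_four (log_natCast_nonneg n))

@[fun_prop]
lemma continuous_quadTerm (n : ℕ) : Continuous (quadTerm n) := by
  unfold quadTerm
  fun_prop

@[fun_prop]
lemma continuous_unscale (n : ℕ) : Continuous (unscale n) := by
  unfold unscale
  fun_prop

lemma hasDerivAt_unscale (n : ℕ) (y : ℝ) : HasDerivAt (unscale n) (aSeq n)⁻¹ y := by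
  have h := (((hasDerivAt_id y).sub_const (cSeq n)).div_const (aSeq n)).const_add (aSeq n)
  exact h.congr_deriv (one_div _)

lemma log_natCast_pos {n : ℕ} (hn : 1 < n) : 0 < log n :=
  log_pos (Nat.one_lt_cast.2 hn)

lemma aSeq_pos {n : ℕ} (hn : 1 < n) : 0 < aSeq n :=
  sqrt_pos.2 (mul_pos two_pos (log_natCast_pos hn))

lemma sq_aSeq (n : ℕ) : aSeq n ^ 2 = 2 * log n :=
  sq_sqrt (mul_nonneg zero_le_two (log_natCast_nonneg n))

lemma exp_cSeq {n : ℕ} (hn : 1 < n) : exp (cSeq n) = √(4 * π * log n) := by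
  have := log_natCast_pos hn
  exact exp_log (by positivity)

lemma exp_cSeq_eq_mul_aSeq {n : ℕ} (hn : 1 < n) : exp (cSeq n) = √(2 * π) * aSeq n := by
  rw [exp_cSeq hn, aSeq, ← sqrt_mul (by positivity)]
  ring_nf

lemma tendsto_log_natCast : Tendsto (fun n : ℕ => log n) atTop atTop :=
  tendsto_log_atTop.comp tendsto_natCast_atTop_atTop

lemma tendsto_unscale {n : ℕ} (hn : 1 < n) : Tendsto (unscale n) atTop atTop :=
  tendsto_atTop_add_const_left _ _ <|
    (tendsto_atTop_add_const_right _ _ tendsto_id).atTop_div_const (aSeq_pos hn)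

lemma tendsto_cSeq : Tendsto cSeq atTop atTop :=
  tendsto_log_atTop.comp <| tendsto_sqrt_atTop.comp <|
    tendsto_log_natCast.const_mul_atTop (by positivity)

lemma tendsto_sq_cSeq_div_log : Tendsto (fun n => cSeq n ^ 2 / log n) atTop (𝓝 0) := by
  have h := ((tendsto_div_pow_mul_exp_add_atTop 1 0 1 one_ne_zero.symm).comp tendsto_cSeq).pow 2
    |>.const_mul (4 * π)
  rw [zero_pow two_ne_zero, mul_zero] at h
  refine h.congr' ?_
  filter_upwards [eventually_gt_atTop 1] with n hn
  have hlog := log_natCast_pos hn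
  simp only [Function.comp_apply, pow_one, one_mul, add_zero, div_pow, exp_cSeq hn]
  rw [sq_sqrt (by positivity)]
  field_simp

lemma tendsto_div_cSeq_sub_one_pow_four (y : ℝ) :
    Tendsto (fun n => (y / cSeq n - 1) ^ 4) atTop (𝓝 1) := by
  simpa [show ((-1 : ℝ)) ^ 4 = 1 by norm_num] using
    ((tendsto_cSeq.const_div_atTop y).sub_const 1).pow 4

lemma tendsto_quadTerm (y : ℝ) : Tendsto (quadTerm · y) atTop (𝓝 0) := by
  have h := ((((tendsto_cSeq.const_div_atTop y).sub_const 1).pow 2).mul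
    tendsto_sq_cSeq_div_log).div_const 4
  simp only [mul_zero, zero_div] at h
  refine h.congr' ?_
  filter_upwards [tendsto_cSeq.eventually_gt_atTop 0] with n hc
  rw [quadTerm, show y - cSeq n = (y / cSeq n - 1) * cSeq n by field_simp]
  ring

lemma sq_quadTerm_div_two {n : ℕ} (hc : cSeq n ≠ 0) (y : ℝ) :
    quadTerm n y ^ 2 / 2 = errorScale n * (y / cSeq n - 1) ^ 4 := by
  rw [quadTerm, errorScale, show y - cSeq n = (y / cSeq n - 1) * cSeq n by field_simp]
  ring

lemma sq_quadTerm_le {n : ℕ} (hc : 1 ≤ cSeq n) (y : ℝ) :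
    quadTerm n y ^ 2 ≤ 2 * errorScale n * (1 + |y|) ^ 4 := by
  have hpow : (y / cSeq n - 1) ^ 4 ≤ (1 + |y|) ^ 4 := by
    rw [← Even.pow_abs (by decide : Even 4) (y / cSeq n - 1)]
    gcongr
    calc |y / cSeq n - 1| ≤ |y / cSeq n| + |1| := abs_sub _ _
      _ = 1 + |y| / cSeq n := by
        rw [abs_div, abs_one, abs_of_pos (by linarith : 0 < cSeq n), add_comm]
      _ ≤ 1 + |y| := by gcongr; exact div_le_self (abs_nonneg y) hc
  have hscale : 0 ≤ errorScale n := by unfold errorScale; positivity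
  nlinarith [sq_quadTerm_div_two (by positivity : cSeq n ≠ 0) y,
    mul_le_mul_of_nonneg_left hpow hscale]

lemma errorScale_pos {n : ℕ} (hn : 1 < n) (hc : 0 < cSeq n) : 0 < errorScale n := by
  have := log_natCast_pos hn
  unfold errorScale
  positivity

lemma tendsto_inv_natCast_mul_errorScale :
    Tendsto (fun n : ℕ => (n * errorScale n)⁻¹) atTop (𝓝 0) := by
  have hlog : Tendsto (fun n : ℕ => log n ^ 2 / n) atTop (𝓝 0) :=
    (isLittleO_pow_log_id_atTop (n := 2)).tendsto_div_nhds_zero.comp tendsto_natCast_atTop_atTop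
  have hc : Tendsto (fun n => (cSeq n ^ 4)⁻¹) atTop (𝓝 0) :=
    ((tendsto_pow_atTop four_ne_zero).comp tendsto_cSeq).inv_tendsto_atTop
  have h := (hlog.mul hc).const_mul 32
  simp only [mul_zero] at h
  refine h.congr fun n => ?_
  rw [errorScale, mul_inv, inv_div]
  ring

end Scaling

section GumbelLimit

lemma natCast_mul_stdNormalPDF_unscale {n : ℕ} (hn : 1 < n) (y : ℝ) :
    n * (aSeq n)⁻¹ * stdNormalPDF (unscale n y) = exp (-y - quadTerm n y) := by
  have hn0 : (0 : ℝ) < n := by positivity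
  have ha := aSeq_pos hn
  have hsq : -unscale n y ^ 2 / 2 = -log n + (cSeq n + (-y - quadTerm n y)) := by
    rw [quadTerm, show 4 * log n = 2 * aSeq n ^ 2 by rw [sq_aSeq]; ring, unscale,
      show log n = aSeq n ^ 2 / 2 by rw [sq_aSeq]; ring]
    field_simp
    ring
  rw [stdNormalPDF, hsq, exp_add, exp_add, exp_neg, exp_log hn0, exp_cSeq_eq_mul_aSeq hn]
  field_simp

lemma hasDerivAt_stdNormalCDF_unscale (n : ℕ) (y : ℝ) :
    HasDerivAt (fun y => stdNormalCDF (unscale n y))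
      (stdNormalPDF (unscale n y) * (aSeq n)⁻¹) y :=
  (hasDerivAt_stdNormalCDF _).comp y (hasDerivAt_unscale n y)

lemma tendsto_stdNormalCDF_unscale_atTop {n : ℕ} (hn : 1 < n) :
    Tendsto (fun y => stdNormalCDF (unscale n y)) atTop (𝓝 1) :=
  tendsto_stdNormalCDF_atTop.comp (tendsto_unscale hn)

lemma exp_neg_sub_quadTerm_le (n : ℕ) (y : ℝ) : exp (-y - quadTerm n y) ≤ exp (-y) :=
  exp_le_exp.2 (sub_le_self _ (quadTerm_nonneg n y))

lemma integrableOn_exp_neg_sub_quadTerm_Ioi (n : ℕ) (y : ℝ) :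
    IntegrableOn (fun t => exp (-t - quadTerm n t)) (Set.Ioi y) := by
  refine (integrableOn_exp_neg_Ioi y).mono' (by fun_prop) (Eventually.of_forall fun t => ?_)
  simpa using exp_neg_sub_quadTerm_le n t

lemma natCast_mul_one_sub_stdNormalCDF_unscale {n : ℕ} (hn : 1 < n) (y : ℝ) :
    n * (1 - stdNormalCDF (unscale n y)) = ∫ t in Set.Ioi y, exp (-t - quadTerm n t) := by
  have hderiv (t : ℝ) : HasDerivAt (fun t => n * stdNormalCDF (unscale n t))
      (exp (-t - quadTerm n t)) t := by
    refine ((hasDerivAt_stdNormalCDF_unscale n t).const_mul (n : ℝ)).congr_deriv ?_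
    rw [← natCast_mul_stdNormalPDF_unscale hn]
    ring
  rw [integral_Ioi_of_hasDerivAt_of_tendsto' (fun t _ => hderiv t)
    (integrableOn_exp_neg_sub_quadTerm_Ioi n y)
    ((tendsto_stdNormalCDF_unscale_atTop hn).const_mul (n : ℝ))]
  ring

lemma one_sub_stdNormalCDF_unscale_le {n : ℕ} (hn : 1 < n) (y : ℝ) :
    1 - stdNormalCDF (unscale n y) ≤ exp (-y) / n := by
  rw [le_div_iff₀' (by positivity), natCast_mul_one_sub_stdNormalCDF_unscale hn,
    ← integral_exp_neg_Ioi y]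
  exact setIntegral_mono (integrableOn_exp_neg_sub_quadTerm_Ioi n y) (integrableOn_exp_neg_Ioi y)
    (exp_neg_sub_quadTerm_le n)

lemma tendsto_natCast_mul_one_sub_stdNormalCDF_unscale (y : ℝ) :
    Tendsto (fun n : ℕ => n * (1 - stdNormalCDF (unscale n y))) atTop (𝓝 (exp (-y))) := by
  have hint : Tendsto (fun n => ∫ t in Set.Ioi y, exp (-t - quadTerm n t)) atTop
      (𝓝 (∫ t in Set.Ioi y, exp (-t))) := by
    refine tendsto_integral_filter_of_dominated_convergence (fun t => exp (-t))
      (Eventually.of_forall fun n => by fun_prop)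
      (Eventually.of_forall fun n => Eventually.of_forall fun t => ?_)
      (integrableOn_exp_neg_Ioi y) (Eventually.of_forall fun t => ?_)
    · simpa using exp_neg_sub_quadTerm_le n t
    · simpa using ((tendsto_quadTerm t).const_sub (-t)).rexp
  rw [integral_exp_neg_Ioi] at hint
  refine hint.congr' ?_
  filter_upwards [eventually_gt_atTop 1] with n hn
  exact (natCast_mul_one_sub_stdNormalCDF_unscale hn y).symm

lemma tendsto_stdNormalCDF_unscale_pow_pred (y : ℝ) :
    Tendsto (fun n : ℕ => stdNormalCDF (unscale n y) ^ (n - 1)) atTop (𝓝 (exp (-exp (-y)))) := by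
  have htail := tendsto_natCast_mul_one_sub_stdNormalCDF_unscale y
  have hone : Tendsto (fun n : ℕ => stdNormalCDF (unscale n y)) atTop (𝓝 1) := by
    have h := (htail.div_atTop tendsto_natCast_atTop_atTop).const_sub 1
    rw [sub_zero] at h
    refine h.congr' ?_
    filter_upwards [eventually_gt_atTop 0] with n hn
    field_simp
    ring
  have hpow : Tendsto (fun n : ℕ => stdNormalCDF (unscale n y) ^ n) atTop
      (𝓝 (exp (-exp (-y)))) := by
    simpa using tendsto_one_add_pow_exp_of_tendsto
      (g := fun n => stdNormalCDF (unscale n y) - 1) (htail.neg.congr fun n => by ring)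
  have h := hpow.div hone one_ne_zero
  rw [div_one] at h
  refine h.congr' ?_
  filter_upwards [eventually_gt_atTop 0] with n hn
  rw [Pi.div_apply, pow_sub₀ _ (stdNormalCDF_pos _).ne' hn, pow_one, div_eq_mul_inv]

lemma concaveOn_log_stdNormalCDF_unscale (n : ℕ) :
    ConcaveOn ℝ Set.univ fun y => log (stdNormalCDF (unscale n y)) := by
  have hline : unscale n = AffineMap.lineMap (unscale n 0) (unscale n 1) := by
    ext y
    simp only [unscale, AffineMap.lineMap_apply, vsub_eq_sub, smul_eq_mul, vadd_eq_add]
    ring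
  rw [hline]
  exact concaveOn_log_stdNormalCDF.comp_affineMap (AffineMap.lineMap (unscale n 0) (unscale n 1))

/- Log-concavity turns pointwise convergence into a bound uniform in `y → -∞`, so that no
quantitative estimate of the left normal tail is needed. -/
lemma exists_eventually_stdNormalCDF_unscale_pow_pred_le {k : ℝ} (hk : 0 ≤ k) :
    ∃ C, ∀ᶠ n in atTop, ∀ y, stdNormalCDF (unscale n y) ^ (n - 1) ≤ C * exp (k * y) := by
  have hlim (y : ℝ) : Tendsto (fun n : ℕ => ((n - 1 : ℕ) : ℝ) * log (stdNormalCDF (unscale n y)))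
      atTop (𝓝 (-exp (-y))) := by
    simpa [log_pow] using
      (tendsto_stdNormalCDF_unscale_pow_pred y).log (exp_pos _).ne'
  have hsuper : Tendsto (fun y => -exp (-y) / y) atBot atTop := by
    refine ((tendsto_exp_div_pow_atTop 1).comp tendsto_neg_atBot_atTop).congr fun y => ?_
    simp [div_neg, neg_div]
  obtain ⟨b, hb⟩ := exists_eventually_forall_le_mul_add_of_concaveOn
    (fun n => (concaveOn_log_stdNormalCDF_unscale n).smul (Nat.cast_nonneg (n - 1)))
    (fun n y => mul_nonpos_of_nonneg_of_nonpos (Nat.cast_nonneg (n - 1))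
      (log_nonpos (stdNormalCDF_pos _).le (stdNormalCDF_le_one (unscale n y))))
    hlim hsuper hk
  refine ⟨exp b, hb.mono fun n hn y => ?_⟩
  rw [← exp_add, add_comm b, ← log_le_iff_le_exp (pow_pos (stdNormalCDF_pos _) _), log_pow]
  exact hn y

end GumbelLimit

section Remainder

/-- The density of `Y_n` without its factor `e^{-quadTerm}`; it converges to `gumbelPDF`. -/
noncomputable def gumbelApprox (n : ℕ) (y : ℝ) : ℝ :=
  exp (-y) * stdNormalCDF (unscale n y) ^ (n - 1)

/-- The difference between the integrand `(e^{-y} - quadTerm) * fmax'` and the derivative of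
`(1 + e^{-y}) Φ(unscale n y)^n`, which has integral `1`. -/
noncomputable def remainder (n : ℕ) (y : ℝ) : ℝ :=
  exp (-y) * stdNormalCDF (unscale n y) ^ n - (1 + quadTerm n y) * fmax' n y

@[fun_prop]
lemma continuous_fmax' (n : ℕ) : Continuous (fmax' n) := by
  unfold fmax'
  fun_prop

@[fun_prop]
lemma continuous_remainder (n : ℕ) : Continuous (remainder n) := by
  unfold remainder
  fun_prop

lemma gumbelApprox_pos (n : ℕ) (y : ℝ) : 0 < gumbelApprox n y :=
  mul_pos (exp_pos _) (pow_pos (stdNormalCDF_pos _) _)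

lemma tendsto_gumbelApprox (y : ℝ) : Tendsto (gumbelApprox · y) atTop (𝓝 (gumbelPDF y)) := by
  rw [gumbelPDF, sub_eq_add_neg, exp_add]
  exact (tendsto_stdNormalCDF_unscale_pow_pred y).const_mul _

lemma exists_eventually_one_add_exp_neg_mul_gumbelApprox_le :
    ∃ K, ∀ᶠ n in atTop, ∀ y, (1 + exp (-y)) * gumbelApprox n y ≤ K * exp (-|y|) := by
  obtain ⟨C, hC⟩ := exists_eventually_stdNormalCDF_unscale_pow_pred_le zero_le_three
  refine ⟨max 2 (2 * C), hC.mono fun n hn y => ?_⟩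
  have hΦ := stdNormalCDF_pos (unscale n y)
  rcases le_total 0 y with hy | hy
  · have hexp : exp (-y) ≤ 1 := exp_le_one_iff.2 (by linarith)
    have hpow := pow_le_one₀ (n := n - 1) hΦ.le (stdNormalCDF_le_one _)
    calc (1 + exp (-y)) * gumbelApprox n y ≤ (1 + 1) * (exp (-y) * 1) := by
          unfold gumbelApprox
          gcongr
      _ = 2 * exp (-|y|) := by rw [abs_of_nonneg hy]; ring
      _ ≤ max 2 (2 * C) * exp (-|y|) := by gcongr; exact le_max_left _ _
  · have hexp : 1 ≤ exp (-y) := one_le_exp (by linarith)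
    calc (1 + exp (-y)) * gumbelApprox n y
        ≤ (exp (-y) + exp (-y)) * (exp (-y) * (C * exp (3 * y))) := by
          unfold gumbelApprox
          gcongr
          exact hn y
      _ = 2 * C * (exp (-y) * exp (-y) * exp (3 * y)) := by ring
      _ = 2 * C * exp (-|y|) := by
          rw [abs_of_nonpos hy, ← exp_add, ← exp_add]
          ring_nf
      _ ≤ max 2 (2 * C) * exp (-|y|) := by gcongr; exact le_max_right _ _

lemma fmax'_eq_exp_neg_quadTerm_mul_gumbelApprox {n : ℕ} (hn : 1 < n) (y : ℝ) :
    fmax' n y = exp (-quadTerm n y) * gumbelApprox n y := by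
  change n * (aSeq n)⁻¹ * stdNormalPDF (unscale n y) * stdNormalCDF (unscale n y) ^ (n - 1) = _
  rw [natCast_mul_stdNormalPDF_unscale hn, gumbelApprox, sub_eq_add_neg, exp_add]
  ring

lemma exp_neg_mul_stdNormalCDF_unscale_pow {n : ℕ} (hn : 1 < n) (y : ℝ) :
    exp (-y) * stdNormalCDF (unscale n y) ^ n = stdNormalCDF (unscale n y) * gumbelApprox n y := by
  rw [gumbelApprox, ← mul_pow_sub_one (by lia : n ≠ 0)]
  ring

lemma remainder_eq {n : ℕ} (hn : 1 < n) (y : ℝ) :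
    remainder n y = ((1 - (1 + quadTerm n y) * exp (-quadTerm n y)) -
      (1 - stdNormalCDF (unscale n y))) * gumbelApprox n y := by
  rw [remainder, fmax'_eq_exp_neg_quadTerm_mul_gumbelApprox hn,
    exp_neg_mul_stdNormalCDF_unscale_pow hn]
  ring

lemma hasDerivAt_stdNormalCDF_unscale_pow (n : ℕ) (y : ℝ) :
    HasDerivAt (fun y => stdNormalCDF (unscale n y) ^ n) (fmax' n y) y := by
  refine ((hasDerivAt_stdNormalCDF_unscale n y).pow n).congr_deriv ?_
  simp only [fmax', unscale]
  ring

variable {n : ℕ} {K : ℝ}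

lemma integrable_of_abs_le_one_add_exp_neg_mul_gumbelApprox
    (hK : ∀ y, (1 + exp (-y)) * gumbelApprox n y ≤ K * exp (-|y|)) {f : ℝ → ℝ}
    (hcont : Continuous f) (hf : ∀ y, |f y| ≤ (1 + exp (-y)) * gumbelApprox n y) :
    Integrable f := by
  have hexp : Integrable fun y : ℝ => exp (-|y|) := by
    simpa using integrable_one_add_abs_pow_mul_exp_neg_abs 0
  exact (hexp.const_mul K).mono' hcont.aestronglyMeasurable
    (Eventually.of_forall fun y => (hf y).trans (hK y))

lemma integrable_remainder (hn : 1 < n)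
    (hK : ∀ y, (1 + exp (-y)) * gumbelApprox n y ≤ K * exp (-|y|)) : Integrable (remainder n) := by
  refine integrable_of_abs_le_one_add_exp_neg_mul_gumbelApprox hK (continuous_remainder n)
    fun y => ?_
  have hv := quadTerm_nonneg n y
  have hv1 := one_add_mul_exp_neg_le_one (quadTerm n y)
  have hv0 : 0 ≤ (1 + quadTerm n y) * exp (-quadTerm n y) := by positivity
  rw [remainder_eq hn, abs_mul, abs_of_pos (gumbelApprox_pos n y)]
  gcongr
  · exact (gumbelApprox_pos n y).le
  · exact (abs_sub_le_of_nonneg_of_le (by linarith) (by linarith)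
      (sub_nonneg.2 (stdNormalCDF_le_one _)) (by linarith [stdNormalCDF_pos (unscale n y)])).trans
      (by linarith [exp_pos (-y)] : (1 : ℝ) ≤ 1 + exp (-y))

lemma hasDerivAt_one_add_exp_neg_mul_stdNormalCDF_unscale_pow (n : ℕ) (y : ℝ) :
    HasDerivAt (fun y => (1 + exp (-y)) * stdNormalCDF (unscale n y) ^ n)
      ((1 + exp (-y)) * fmax' n y - exp (-y) * stdNormalCDF (unscale n y) ^ n) y := by
  refine (((hasDerivAt_neg y).exp.const_add 1).mul
    (hasDerivAt_stdNormalCDF_unscale_pow n y)).congr_deriv ?_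
  ring

lemma integrable_deriv_one_add_exp_neg_mul_stdNormalCDF_unscale_pow (hn : 1 < n)
    (hK : ∀ y, (1 + exp (-y)) * gumbelApprox n y ≤ K * exp (-|y|)) :
    Integrable fun y => (1 + exp (-y)) * fmax' n y - exp (-y) * stdNormalCDF (unscale n y) ^ n := by
  refine integrable_of_abs_le_one_add_exp_neg_mul_gumbelApprox hK (by fun_prop) fun y => ?_
  have hw := gumbelApprox_pos n y
  have hfmax : fmax' n y ≤ gumbelApprox n y := by
    rw [fmax'_eq_exp_neg_quadTerm_mul_gumbelApprox hn]
    exact mul_le_of_le_one_left hw.le (exp_le_one_iff.2 (neg_nonpos.2 (quadTerm_nonneg n y)))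
  have hfmax0 : 0 ≤ fmax' n y := by
    rw [fmax'_eq_exp_neg_quadTerm_mul_gumbelApprox hn]
    positivity
  rw [exp_neg_mul_stdNormalCDF_unscale_pow hn]
  refine abs_sub_le_of_nonneg_of_le (by positivity) (by gcongr)
    (mul_pos (stdNormalCDF_pos _) hw).le ?_
  gcongr
  linarith [stdNormalCDF_le_one (unscale n y), exp_pos (-y)]

lemma tendsto_one_add_exp_neg_mul_stdNormalCDF_unscale_pow_atBot (hn : 1 < n)
    (hK : ∀ y, (1 + exp (-y)) * gumbelApprox n y ≤ K * exp (-|y|)) :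
    Tendsto (fun y => (1 + exp (-y)) * stdNormalCDF (unscale n y) ^ n) atBot (𝓝 0) := by
  have hexp : Tendsto (fun y : ℝ => K * exp (-|y|)) atBot (𝓝 0) := by
    simpa using (tendsto_exp_neg_atTop_nhds_zero.comp tendsto_abs_atBot_atTop).const_mul K
  refine squeeze_zero' (Eventually.of_forall fun y => ?_) ?_ hexp
  · have := stdNormalCDF_pos (unscale n y)
    positivity
  · filter_upwards [eventually_le_atBot 0] with y hy
    refine le_trans ?_ (hK y)
    gcongr
    calc stdNormalCDF (unscale n y) ^ n
        ≤ exp (-y) * stdNormalCDF (unscale n y) ^ n :=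
          le_mul_of_one_le_left (pow_pos (stdNormalCDF_pos _) _).le (one_le_exp (by linarith))
      _ = stdNormalCDF (unscale n y) * gumbelApprox n y :=
          exp_neg_mul_stdNormalCDF_unscale_pow hn y
      _ ≤ gumbelApprox n y :=
          mul_le_of_le_one_left (gumbelApprox_pos n y).le (stdNormalCDF_le_one _)

lemma tendsto_one_add_exp_neg_mul_stdNormalCDF_unscale_pow_atTop (hn : 1 < n) :
    Tendsto (fun y => (1 + exp (-y)) * stdNormalCDF (unscale n y) ^ n) atTop (𝓝 1) := by
  simpa using (tendsto_exp_neg_atTop_nhds_zero.const_add 1).mul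
    ((tendsto_stdNormalCDF_unscale_atTop hn).pow n)

lemma integral_eq_one_add_integral_remainder (hn : 1 < n)
    (hK : ∀ y, (1 + exp (-y)) * gumbelApprox n y ≤ K * exp (-|y|)) :
    ∫ y, (exp (-y) - (y - cSeq n) ^ 2 / (4 * log n)) * fmax' n y = 1 + ∫ y, remainder n y := by
  have hint := integrable_deriv_one_add_exp_neg_mul_stdNormalCDF_unscale_pow hn hK
  have hone := integral_of_hasDerivAt_of_tendsto
    (hasDerivAt_one_add_exp_neg_mul_stdNormalCDF_unscale_pow n) hint
    (tendsto_one_add_exp_neg_mul_stdNormalCDF_unscale_pow_atBot hn hK)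
    (tendsto_one_add_exp_neg_mul_stdNormalCDF_unscale_pow_atTop hn)
  rw [sub_zero] at hone
  rw [← hone, ← integral_add hint (integrable_remainder hn hK)]
  congr with y
  rw [remainder, quadTerm]
  ring

lemma abs_remainder_le (hn : 1 < n) (hc : 1 ≤ cSeq n) (hscale : (n * errorScale n)⁻¹ ≤ 1)
    (hK : ∀ y, (1 + exp (-y)) * gumbelApprox n y ≤ K * exp (-|y|)) (y : ℝ) :
    |remainder n y| ≤ errorScale n * (2 * K * ((1 + |y|) ^ 4 * exp (-|y|))) := by
  have hε : 0 < errorScale n := errorScale_pos hn (by linarith)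
  have hv := quadTerm_nonneg n y
  have hψ := one_sub_one_add_mul_exp_neg_le_sq (by linarith : -1 ≤ quadTerm n y)
  have hψ0 := one_add_mul_exp_neg_le_one (quadTerm n y)
  have hΦ : 1 - stdNormalCDF (unscale n y) ≤ errorScale n * exp (-y) := by
    refine (one_sub_stdNormalCDF_unscale_le hn y).trans ?_
    rw [inv_le_one₀ (by positivity)] at hscale
    rw [div_le_iff₀' (by positivity), ← mul_assoc]
    exact le_mul_of_one_le_left (exp_pos _).le hscale
  have hpow : (1 : ℝ) ≤ (1 + |y|) ^ 4 := one_le_pow₀ (by linarith [abs_nonneg y])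
  have hfactor : |(1 - (1 + quadTerm n y) * exp (-quadTerm n y)) -
      (1 - stdNormalCDF (unscale n y))| ≤
      2 * errorScale n * (1 + |y|) ^ 4 * (1 + exp (-y)) := by
    have hεexp : errorScale n * exp (-y) ≤ 2 * errorScale n * (1 + |y|) ^ 4 * exp (-y) := by
      gcongr
      nlinarith
    have := stdNormalCDF_le_one (unscale n y)
    rw [abs_sub_le_iff]
    constructor <;> nlinarith [sq_quadTerm_le hc y]
  calc |remainder n y|
      ≤ 2 * errorScale n * (1 + |y|) ^ 4 * (1 + exp (-y)) * gumbelApprox n y := by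
        rw [remainder_eq hn, abs_mul, abs_of_pos (gumbelApprox_pos n y)]
        exact mul_le_mul_of_nonneg_right hfactor (gumbelApprox_pos n y).le
    _ = 2 * errorScale n * (1 + |y|) ^ 4 * ((1 + exp (-y)) * gumbelApprox n y) := by ring
    _ ≤ 2 * errorScale n * (1 + |y|) ^ 4 * (K * exp (-|y|)) := by
        exact mul_le_mul_of_nonneg_left (hK y) (by positivity)
    _ = errorScale n * (2 * K * ((1 + |y|) ^ 4 * exp (-|y|))) := by ring

lemma tendsto_one_sub_one_add_quadTerm_mul_exp_neg_div_errorScale (y : ℝ) :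
    Tendsto (fun n => (1 - (1 + quadTerm n y) * exp (-quadTerm n y)) / errorScale n)
      atTop (𝓝 1) := by
  have hratio : Tendsto (fun n => quadTerm n y ^ 2 / 2 / errorScale n) atTop (𝓝 1) := by
    refine (tendsto_div_cSeq_sub_one_pow_four y).congr' ?_
    filter_upwards [eventually_gt_atTop 1, tendsto_cSeq.eventually_gt_atTop 0] with n hn hc
    rw [sq_quadTerm_div_two hc.ne', mul_div_cancel_left₀ _ (errorScale_pos hn hc).ne']
  exact ((isEquivalent_one_sub_one_add_mul_exp_neg.comp_tendsto (tendsto_quadTerm y)).div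
    (Asymptotics.IsEquivalent.refl (u := errorScale))).symm.tendsto_nhds hratio

lemma tendsto_one_sub_stdNormalCDF_unscale_div_errorScale (y : ℝ) :
    Tendsto (fun n => (1 - stdNormalCDF (unscale n y)) / errorScale n) atTop (𝓝 0) := by
  have h := (tendsto_natCast_mul_one_sub_stdNormalCDF_unscale y).mul
    tendsto_inv_natCast_mul_errorScale
  rw [mul_zero] at h
  refine h.congr' ?_
  filter_upwards [eventually_gt_atTop 0] with n hn
  rw [mul_inv, div_eq_mul_inv]
  field_simp

lemma tendsto_remainder_div_errorScale (y : ℝ) :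
    Tendsto (fun n => remainder n y / errorScale n) atTop (𝓝 (gumbelPDF y)) := by
  have h := ((tendsto_one_sub_one_add_quadTerm_mul_exp_neg_div_errorScale y).sub
    (tendsto_one_sub_stdNormalCDF_unscale_div_errorScale y)).mul (tendsto_gumbelApprox y)
  rw [sub_zero, one_mul] at h
  refine h.congr' ?_
  filter_upwards [eventually_gt_atTop 1] with n hn
  rw [remainder_eq hn, ← sub_div, div_mul_eq_mul_div]

lemma tendsto_integral_remainder_div_errorScale :
    Tendsto (fun n => (∫ y, remainder n y) / errorScale n) atTop (𝓝 1) := by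
  obtain ⟨K, hK⟩ := exists_eventually_one_add_exp_neg_mul_gumbelApprox_le
  simp only [← integral_div, ← integral_gumbelPDF]
  refine tendsto_integral_filter_of_dominated_convergence
    (fun y => 2 * K * ((1 + |y|) ^ 4 * exp (-|y|)))
    (Eventually.of_forall fun n => by fun_prop) ?_
    ((integrable_one_add_abs_pow_mul_exp_neg_abs 4).const_mul _)
    (Eventually.of_forall tendsto_remainder_div_errorScale)
  filter_upwards [hK, eventually_gt_atTop 1, tendsto_cSeq.eventually_ge_atTop 1,
    tendsto_inv_natCast_mul_errorScale.eventually_le_const one_pos] with n hKn hn hc hscale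
  refine Eventually.of_forall fun y => ?_
  have hε : 0 < errorScale n := errorScale_pos hn (by linarith)
  rw [norm_eq_abs, abs_div, abs_of_pos hε, div_le_iff₀' hε]
  exact abs_remainder_le hn hc hscale hKn y

end Remainder

/-- Asymptotics of `E[e^{-Y_n} - (Y_n - c_n)²/(4 log n)]`:
it equals `1 + (c_n⁴/(32 (log n)²)) (1 + o(1))` as `n → ∞`. -/
theorem expectation_exp_asymptotic :
    Tendsto (fun n : ℕ =>
        ((∫ x : ℝ, (Real.exp (-x) - (x - cSeq n) ^ 2 / (4 * Real.log n)) * fmax' n x) - 1) /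
          ((cSeq n) ^ 4 / (32 * (Real.log n) ^ 2)))
      atTop (nhds 1) := by
  obtain ⟨K, hK⟩ := exists_eventually_one_add_exp_neg_mul_gumbelApprox_le
  refine tendsto_integral_remainder_div_errorScale.congr' ?_
  filter_upwards [hK, eventually_gt_atTop 1] with n hKn hn
  rw [integral_eq_one_add_integral_remainder hn hKn, add_sub_cancel_left, errorScale]
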